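/- For all n ≥ 2: (a) the number of lattice points in P_n(123,132) is the Catalan number C_n = binom(2n,n)/(n+1), i.e. |P_n(123,132) ∩ ℤ^n| = C_n; and (b) lim_{m→∞} |m·P_n(123,132) ∩ ℤ^n| / m^{n−1} = n^{n−2}/(n−1)! (equivalently, the normalized volume of the (n−1)-dimensional polytope P_n(123,132) is n^{n−2}). -/

import Mathlib

open Pointwise


/-- `σ` contains the pattern `π`. -/
def containsPattern {n k : ℕ} (σ : Equiv.Perm (Fin n)) (π : Equiv.Perm (Fin k)) : Prop :=
  ∃ f : Fin k → Fin n, StrictMono f ∧ ∀ a b : Fin k, σ (f a) < σ (f b) ↔ π a < π b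

/-- The pattern 123. -/
def p123 : Equiv.Perm (Fin 3) := 1
/-- The pattern 132. -/
def p132 : Equiv.Perm (Fin 3) := Equiv.swap 1 2

/-- The point `(σ(1), …, σ(n)) ∈ ℝ^n` (one-based values). -/
def permPoint {n : ℕ} (σ : Equiv.Perm (Fin n)) : Fin n → ℝ := fun i => ((σ i : ℕ) : ℝ) + 1

/-- The polytope `P_n(123,132)`. -/
def P123132 (n : ℕ) : Set (Fin n → ℝ) :=
  convexHull ℝ (permPoint ''
    {σ : Equiv.Perm (Fin n) | ¬ containsPattern σ p123 ∧ ¬ containsPattern σ p132})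



/-- count of sequences. -/
def cnt (m : ℕ) : ℕ → ℕ → ℕ
  | 0, _ => 1
  | k+1, d => ∑ e ∈ Finset.range (d + m + 1), cnt m k e

/-- Abel-Rothe closed form -/
theorem cnt_closed (m k : ℕ) : ∀ d : ℕ, (k+1) * cnt m (k+1) d =
    (d + m + 1) * Nat.choose (d + m + (m+1)*(k+1)) k := by
  induction k with
  | zero => intro d; simp [cnt]
  | succ k ih =>
    have key : ∀ X : ℕ, (k+1+1) * ∑ e ∈ Finset.range X, cnt m (k+1) e =
        X * Nat.choose (X + (m+1)*(k+1+1) - 1) (k+1) := by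
      intro X
      induction X with
      | zero => simp
      | succ X ihX =>
        rw [Finset.sum_range_succ, mul_add, ihX]
        have h := ih X
        set M := X + m + (m+1)*(k+1) with hM
        have e1 : X + (m+1)*(k+1+1) - 1 = M := by
          have : X + (m+1)*(k+1+1) = M + 1 := by rw [hM]; ring
          omega
        have e2 : X + 1 + (m+1)*(k+1+1) - 1 = M + 1 := by
          have : X + 1 + (m+1)*(k+1+1) = M + 1 + 1 := by rw [hM]; ring
          omega
        rw [e1, e2, Nat.choose_succ_succ]
        have hc := Nat.choose_succ_right_eq M k
        have hle : k ≤ M := by rw [hM]; nlinarith [Nat.zero_le (m*k), Nat.zero_le m]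
        have hz : ((M.choose (k+1) : ℤ)) * (k+1) = M.choose k * (M - k) := by
          have := congrArg (Nat.cast (R := ℤ)) hc
          push_cast [Nat.cast_sub hle] at this
          exact this
        have hz2 : ((k:ℤ)+1) * cnt m (k+1) X = (X+m+1) * M.choose k := by exact_mod_cast h
        have hM' : (M:ℤ) = X + m + (m+1)*(k+1) := by rw [hM]; push_cast; ring
        have : ((k:ℤ)+1) * (X * M.choose (k+1) + (k+1+1) * cnt m (k+1) X) =
          (k+1) * ((X+1) * (M.choose k + M.choose (k+1))) := by
          have : ((k:ℤ)+1) * (X * M.choose (k+1) + (k+1+1) * cnt m (k+1) X) =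
            X * (M.choose (k+1) * (k+1)) + (k+1+1) * ((k+1) * cnt m (k+1) X) := by ring
          rw [this, hz2]
          have : ((k:ℤ)+1) * ((X+1) * (M.choose k + M.choose (k+1))) =
            (k+1)*(X+1) * M.choose k + (X+1) * (M.choose (k+1) * (k+1)) := by ring
          rw [this, hz, hM']; ring
        have h3 := mul_left_cancel₀ (by positivity) this
        exact_mod_cast h3
    intro d
    have := key (d + m + 1)
    rw [show d + m + 1 + (m+1)*(k+1+1) - 1 = d + m + (m+1)*(k+1+1) by omega] at this
    rw [← this]; rfl

theorem cnt_one (n : ℕ) (hn : 2 ≤ n) : cnt 1 (n-1) 0 = catalan n := by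
  obtain ⟨k, rfl⟩ : ∃ k, n = k + 2 := ⟨n - 2, by omega⟩
  have h := cnt_closed 1 k 0
  have h2 := succ_mul_catalan_eq_centralBinom (k+2)
  rw [Nat.centralBinom_eq_two_mul_choose] at h2
  rw [show k + 2 - 1 = k + 1 by omega]
  have e : 0 + 1 + (1+1)*(k+1) = 2 * k + 3 := by ring
  rw [e] at h
  -- C(2k+4,k+2)
  have a1 := Nat.add_one_mul_choose_eq (2*k+3) (k+1)
  have a2 := Nat.choose_succ_right_eq (2*k+3) k
  rw [show 2*k+3-k = k+3 by omega] at a2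
  rw [show 2*(k+2) = 2*k+3+1 by ring] at h2
  rw [show k+1+1 = k+2 by ring, ← h2] at a1
  have : (k+1)*(k+2)*(k+3) * cnt 1 (k+1) 0 = (k+1)*(k+2)*(k+3) * catalan (k+2) := by
    calc (k+1)*(k+2)*(k+3) * cnt 1 (k+1) 0 = (k+2)*(k+3)*((k+1)*cnt 1 (k+1) 0) := by ring
      _ = (2*k+3+1) * ((2*k+3).choose k * (k+3)) := by rw [h]; ring
      _ = (k+1) * ((2*k+3+1) * (2*k+3).choose (k+1)) := by rw [← a2]; ring
      _ = _ := by rw [a1]; ring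
  exact Nat.eq_of_mul_eq_mul_left (by positivity) this

theorem cnt_lim (n : ℕ) (hn : 2 ≤ n) :
    Filter.Tendsto (fun m : ℕ => (cnt m (n-1) 0 : ℝ) / (m:ℝ)^(n-1)) Filter.atTop
      (nhds ((n : ℝ) ^ (n - 2) / Nat.factorial (n - 1))) := by
  obtain ⟨k, rfl⟩ : ∃ k, n = k + 2 := ⟨n - 2, by omega⟩
  rw [show k + 2 - 1 = k + 1 by omega, show k + 2 - 2 = k by omega]
  have hlin : ∀ c : ℝ, ∀ a : ℝ, Filter.Tendsto (fun m : ℕ => (a * m + c) / (m:ℝ)) Filter.atTop (nhds a) := by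
    intro c a
    have h0 : Filter.Tendsto (fun m : ℕ => a + c / (m:ℝ)) Filter.atTop (nhds (a + 0)) :=
      tendsto_const_nhds.add (tendsto_const_div_atTop_nhds_zero_nat c)
    rw [add_zero] at h0
    refine h0.congr' ?_
    filter_upwards [Filter.eventually_gt_atTop 0] with m hm
    have : (m:ℝ) ≠ 0 := by positivity
    field_simp
  have hprod : Filter.Tendsto (fun m : ℕ => ((1 * m + 1) / (m:ℝ)) *
      (∏ i ∈ Finset.range k, (((k+2:ℝ) * m + (k + 1 - i)) / (m:ℝ))) / (Nat.factorial (k+1)))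
      Filter.atTop (nhds (1 * (∏ i ∈ Finset.range k, (k+2:ℝ)) / (Nat.factorial (k+1)))) :=
    ((hlin _ _).mul (tendsto_finsetProd _ (fun i _ => hlin _ _))).div_const _
  have e : (1 * (∏ i ∈ Finset.range k, (k+2:ℝ)) / (Nat.factorial (k+1))) =
    ((k+2 : ℕ) : ℝ)^k / (Nat.factorial (k+1)) := by simp
  rw [e] at hprod
  refine hprod.congr' ?_
  filter_upwards [Filter.eventually_gt_atTop 0] with m hm
  have hm0 : (m:ℝ) ≠ 0 := by positivity
  have h := cnt_closed m k 0
  have hd := Nat.descFactorial_eq_factorial_mul_choose (0 + m + (m+1)*(k+1)) k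
  have hd2 : ((Nat.descFactorial (0 + m + (m+1)*(k+1)) k : ℕ) : ℝ) =
      ∏ i ∈ Finset.range k, ((k+2:ℝ) * m + (k + 1 - i)) := by
    rw [Nat.descFactorial_eq_prod_range, Nat.cast_prod]
    apply Finset.prod_congr rfl
    intro i hi
    have hi := Finset.mem_range.1 hi
    rw [Nat.cast_sub (by nlinarith [Nat.zero_le (m*k)])]
    push_cast; ring
  rw [Finset.prod_div_distrib, ← hd2, hd]
  have h' : ((k:ℝ)+1) * cnt m (k+1) 0 = (m+1) * ((0 + m + (m+1)*(k+1)).choose k : ℕ) := by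
    have := congrArg (Nat.cast (R := ℝ)) h
    push_cast at this ⊢
    rw [this]; ring
  have hk : ((k:ℝ)+1) ≠ 0 := by positivity
  have : (cnt m (k+1) 0 : ℝ) = (m+1) * ((0 + m + (m+1)*(k+1)).choose k : ℕ) / (k+1) := by
    rw [← h']; field_simp
  rw [this, Nat.factorial_succ]
  have hf : ((k.factorial : ℕ) : ℝ) ≠ 0 := by positivity
  simp only [Finset.prod_const, Finset.card_range]
  push_cast
  field_simp
  ring

/-- feasible set, dilated by `m`. -/
def feas (n : ℕ) (m : ℝ) : Set (Fin n → ℝ) :=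
  {x | ∃ d : ℕ → ℝ, d 0 = 0 ∧ d n = 0 ∧ (∀ i < n, 0 ≤ d (i+1) ∧ d (i+1) ≤ d i + m) ∧
    ∀ i : Fin n, x i = m * ((n:ℝ) - (i:ℕ)) + d i - d (i+1)}

theorem smul_feas (n : ℕ) (m : ℝ) (hm : 0 < m) : m • feas n 1 = feas n m := by
  ext x
  rw [Set.mem_smul_set]
  constructor
  · rintro ⟨y, ⟨d, h0, hn, h, hy⟩, rfl⟩
    refine ⟨fun i => m * d i, by simp [h0], by simp [hn], ?_, ?_⟩
    · intro i hi
      obtain ⟨h1, h2⟩ := h i hi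
      exact ⟨by positivity, by nlinarith⟩
    · intro i
      simp only [Pi.smul_apply, smul_eq_mul, hy]; ring
  · rintro ⟨d, h0, hn, h, hy⟩
    refine ⟨fun i => m⁻¹ * x i, ⟨fun i => m⁻¹ * d i, by simp [h0], by simp [hn], ?_, ?_⟩, ?_⟩
    · intro i hi
      obtain ⟨h1, h2⟩ := h i hi
      refine ⟨by positivity, ?_⟩
      have : m⁻¹ * d (i+1) ≤ m⁻¹ * (d i + m) := by gcongr
      rwa [mul_add, inv_mul_cancel₀ hm.ne'] at this
    · intro i
      simp only [hy]; field_simp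
    · funext i
      simp only [Pi.smul_apply, smul_eq_mul]; field_simp

/-- integer sequences -/
def seqs (m k d : ℕ) : Set (ℕ → ℕ) :=
  {g | g 0 = d ∧ (∀ i < k, g (i+1) ≤ g i + m) ∧ ∀ i, k < i → g i = 0}

/-- prepend -/
def pre (d : ℕ) (g : ℕ → ℕ) : ℕ → ℕ
  | 0 => d
  | i+1 => g i

theorem pre_inj (d : ℕ) : Function.Injective (pre d) := by
  intro g h e
  funext i
  exact congrFun e (i+1)

theorem seqs_fin (m k : ℕ) : ∀ d, ∃ F : Finset (ℕ → ℕ), (∀ g, g ∈ F ↔ g ∈ seqs m k d) ∧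
    F.card = cnt m k d := by
  classical
  induction k with
  | zero =>
    intro d
    refine ⟨{pre d (fun _ => 0)}, ?_, by simp [cnt]⟩
    intro g
    simp only [Finset.mem_singleton, seqs, Set.mem_ofPred_eq]
    constructor
    · rintro rfl
      refine ⟨rfl, by simp, ?_⟩
      intro i hi
      obtain ⟨j, rfl⟩ : ∃ j, i = j + 1 := ⟨i-1, by omega⟩
      rfl
    · rintro ⟨h0, -, h⟩
      funext i
      cases i with
      | zero => exact h0
      | succ i => exact h (i+1) (by omega)
  | succ k ih =>
    intro d
    choose F hF hc using ih
    refine ⟨(Finset.range (d+m+1)).biUnion (fun e => (F e).image (pre d)), ?_, ?_⟩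
    · intro g
      simp only [Finset.mem_biUnion, Finset.mem_range, Finset.mem_image, hF]
      constructor
      · rintro ⟨e, he, h, ⟨h0, h1, h2⟩, rfl⟩
        refine ⟨rfl, ?_, ?_⟩
        · intro i hi
          cases i with
          | zero => simp only [pre]; omega
          | succ i => exact h1 i (by omega)
        · intro i hi
          cases i with
          | zero => omega
          | succ i => exact h2 i (by omega)
      · rintro ⟨h0, h1, h2⟩
        refine ⟨g 1, ?_, fun i => g (i+1), ⟨rfl, ?_, ?_⟩, ?_⟩
        · have := h1 0 (by omega)
          simp only [zero_add] at this; omega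
        · intro i hi
          exact h1 (i+1) (by omega)
        · intro i hi
          exact h2 (i+1) (by omega)
        · funext i
          cases i with
          | zero => exact h0.symm
          | succ i => rfl
    · rw [Finset.card_biUnion]
      · simp only [Finset.card_image_of_injective _ (pre_inj d), hc, cnt]
      · intro a _ b _ hab
        rw [Function.onFun, Finset.disjoint_left]
        intro g h1 h2
        simp only [Finset.mem_image, hF] at h1 h2
        obtain ⟨u, hu, rfl⟩ := h1
        obtain ⟨v, hv, e⟩ := h2
        have := pre_inj d e
        subst this
        exact hab (hu.1.symm.trans hv.1)

theorem seqs_ncard (m k d : ℕ) : (seqs m k d).ncard = cnt m k d := by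
  obtain ⟨F, h, hc⟩ := seqs_fin m k d
  have : seqs m k d = ↑F := by ext g; simp [h]
  rw [this, Set.ncard_coe_finset, hc]

/-- the map from sequences to points -/
def phi (n m : ℕ) (g : ℕ → ℕ) : Fin n → ℤ :=
  fun i => (m:ℤ) * ((n:ℤ) - (i:ℕ)) + g i - g (i+1)

theorem lattice_ncard (n m : ℕ) (hn : 2 ≤ n) :
    Set.ncard {x : Fin n → ℤ | (fun i => (x i : ℝ)) ∈ feas n m} = cnt m (n-1) 0 := by
  rw [← seqs_ncard]
  have : {x : Fin n → ℤ | (fun i => (x i : ℝ)) ∈ feas n m} = phi n m '' seqs m (n-1) 0 := by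
    ext x
    constructor
    · rintro ⟨d, h0, hdn, h, hx⟩
      have key : ∀ i, i ≤ n → ∃ z : ℕ, d i = z := by
        have key0 : ∀ i, i ≤ n → ∃ z : ℤ, d i = z := by
          intro i
          induction i with
          | zero => intro _; exact ⟨0, by simp [h0]⟩
          | succ i ih =>
            intro hi
            obtain ⟨z, hz⟩ := ih (by omega)
            have := hx ⟨i, by omega⟩
            simp only at this
            refine ⟨m * ((n:ℤ) - i) + z - x ⟨i, by omega⟩, ?_⟩
            push_cast
            rw [← hz]; linarith
        intro i hi
        obtain ⟨z, hz⟩ := key0 i hi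
        have : 0 ≤ d i := by
          cases i with
          | zero => rw [h0]
          | succ i => exact (h i (by omega)).1
        rw [hz] at this
        have hz0 : 0 ≤ z := by exact_mod_cast this
        lift z to ℕ using hz0
        exact ⟨z, by simp [hz]⟩
      choose! g hg using key
      have hgn : g n = 0 := by
        have := hg n le_rfl
        rw [hdn] at this; exact_mod_cast this.symm
      refine ⟨fun i => if i ≤ n then g i else 0, ⟨?_, ?_, ?_⟩, ?_⟩
      · have := hg 0 (by omega)
        rw [h0] at this
        simp only [Nat.zero_le, if_true]
        exact_mod_cast this.symm
      · intro i hi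
        simp only [show i ≤ n by omega, show i + 1 ≤ n by omega, if_true]
        have := (h i (by omega)).2
        rw [hg _ (by omega), hg _ (by omega)] at this
        exact_mod_cast this
      · intro i hi
        by_cases hi' : i = n
        · subst hi'; simp [hgn]
        · simp only [show ¬ i ≤ n by omega, if_false]
      · funext i
        have hi := i.2
        have := hx i
        rw [hg _ (by omega), hg _ (by omega)] at this
        simp only [phi, show (i:ℕ) ≤ n by omega, show (i:ℕ) + 1 ≤ n by omega, if_true]
        have h' : (x i : ℝ) = ((m * ((n:ℤ) - (i:ℕ)) + g i - g (i+1) : ℤ) : ℝ) := by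
          push_cast; linarith
        exact (Int.cast_injective h').symm
    · rintro ⟨g, ⟨h0, h1, h2⟩, rfl⟩
      refine ⟨fun i => g i, by simp [h0], by simp [h2 n (by omega)], ?_, ?_⟩
      · intro i hi
        refine ⟨by positivity, ?_⟩
        show ((g (i+1) : ℕ) : ℝ) ≤ (g i : ℕ) + (m : ℝ)
        by_cases hi' : i + 1 < n
        · exact_mod_cast h1 i (by omega)
        · rw [h2 (i+1) (by omega)]; push_cast; positivity
      · intro i
        simp only [phi]; push_cast; ring
  rw [this]
  apply Set.InjOn.ncard_image
  rintro g ⟨h0, h1, h2⟩ g' ⟨h0', h1', h2'⟩ e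
  have : ∀ i, i ≤ n → g i = g' i := by
    intro i
    induction i with
    | zero => intro _; rw [h0, h0']
    | succ i ih =>
      intro hi
      have a := ih (by omega)
      have b := congrFun e ⟨i, by omega⟩
      simp only [phi] at b
      omega
  funext i
  by_cases hi : i ≤ n
  · exact this i hi
  · rw [h2 i (by omega), h2' i (by omega)]

theorem avoid_iff {n : ℕ} (σ : Equiv.Perm (Fin n)) :
    (¬ containsPattern σ p123 ∧ ¬ containsPattern σ p132) ↔
    ∀ i j k : Fin n, i < j → j < k → σ i < σ j → σ i < σ k → False := by
  constructor
  · rintro ⟨h1, h2⟩ i j k hij hjk h3 h4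
    have hik := hij.trans hjk
    have hne : σ j ≠ σ k := fun h => hjk.ne (σ.injective h)
    have hf : StrictMono ![i, j, k] := by
      intro a b hab
      fin_cases a <;> fin_cases b <;> simp_all
    rcases lt_or_gt_of_ne hne with h | h
    · apply h1
      refine ⟨![i, j, k], hf, ?_⟩
      intro a b
      fin_cases a <;> fin_cases b <;> simp [p123, h, h3, h4, h.le, h3.le, h4.le]
    · apply h2
      refine ⟨![i, j, k], hf, ?_⟩
      have e0 : p132 0 = 0 := by decide
      have e1 : p132 1 = 2 := by decide
      have e2 : p132 2 = 1 := by decide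
      intro a b
      fin_cases a <;> fin_cases b <;> simp [e0, e1, e2, h, h3, h4, h.le, h3.le, h4.le]
  · intro h
    constructor
    · rintro ⟨f, hf, hp⟩
      exact h (f 0) (f 1) (f 2) (hf (by decide)) (hf (by decide))
        ((hp 0 1).2 (by decide)) ((hp 0 2).2 (by decide))
    · rintro ⟨f, hf, hp⟩
      exact h (f 0) (f 1) (f 2) (hf (by decide)) (hf (by decide))
        ((hp 0 1).2 (by decide)) ((hp 0 2).2 (by decide))

theorem feas_convex (n : ℕ) : Convex ℝ (feas n 1) := by
  rintro x ⟨d, h0, hn, h, hx⟩ y ⟨e, h0', hn', h', hy⟩ a b ha hb hab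
  refine ⟨fun i => a * d i + b * e i, by simp [h0, h0'], by simp [hn, hn'], ?_, ?_⟩
  · intro i hi
    obtain ⟨h1, h2⟩ := h i hi
    obtain ⟨h3, h4⟩ := h' i hi
    refine ⟨by positivity, ?_⟩
    have := mul_le_mul_of_nonneg_left h2 ha
    have := mul_le_mul_of_nonneg_left h4 hb
    show a * d (i+1) + b * e (i+1) ≤ a * d i + b * e i + 1
    linarith
  · intro i
    simp only [Pi.add_apply, Pi.smul_apply, smul_eq_mul, hx, hy]
    have : b = 1 - a := by linarith
    subst this; ring

theorem perm_lower {n : ℕ} (σ : Equiv.Perm (Fin n))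
    (h : ∀ i j k : Fin n, i < j → j < k → σ i < σ j → σ i < σ k → False) (i : Fin n) :
    n ≤ (σ i : ℕ) + i + 2 := by
  classical
  have h1 : (Finset.univ.filter (fun j => σ i < σ j)).card = n - 1 - σ i := by
    have : (Finset.univ.filter (fun j => σ i < σ j)) = (Finset.Ioi (σ i)).map σ.symm.toEmbedding := by
      ext j
      simp
    rw [this, Finset.card_map, Fin.card_Ioi]
  have h2 : (Finset.univ.filter (fun j => σ i < σ j)) ⊆
      Finset.Iio i ∪ (Finset.univ.filter (fun j => i < j ∧ σ i < σ j)) := by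
    intro j
    simp only [Finset.mem_filter, Finset.mem_univ, true_and, Finset.mem_union, Finset.mem_Iio]
    intro hj
    rcases lt_trichotomy j i with h | h | h
    · exact Or.inl h
    · subst h; exact absurd hj (lt_irrefl _)
    · exact Or.inr ⟨h, hj⟩
  have h3 : (Finset.univ.filter (fun j => i < j ∧ σ i < σ j)).card ≤ 1 := by
    rw [Finset.card_le_one]
    intro a ha b hb
    simp only [Finset.mem_filter, Finset.mem_univ, true_and] at ha hb
    by_contra hab
    rcases lt_or_gt_of_ne hab with hh | hh
    · exact h i a b ha.1 hh ha.2 hb.2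
    · exact h i b a hb.1 hh hb.2 ha.2
  have h4 := Finset.card_le_card h2
  have h5 := Finset.card_union_le (Finset.Iio i) (Finset.univ.filter (fun j => i < j ∧ σ i < σ j))
  rw [Fin.card_Iio] at h5
  omega

theorem perm_feas {n : ℕ} (σ : Equiv.Perm (Fin n))
    (h : ∀ i j k : Fin n, i < j → j < k → σ i < σ j → σ i < σ k → False) :
    permPoint σ ∈ feas n 1 := by
  classical
  set w : ℕ → ℤ := fun j => if hj : j < n then (n:ℤ) - 1 - ((σ ⟨j, hj⟩ : ℕ) : ℤ) else 0 with hw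
  have hwj : ∀ i : Fin n, w i = (n:ℤ) - 1 - ((σ i : ℕ) : ℤ) := by
    intro i; simp [hw, i.2]
  set d : ℕ → ℤ := fun k => ∑ j ∈ Finset.range k, (w j - j) with hd
  have hs : ∀ k, d (k+1) = d k + (w k - k) := fun k => Finset.sum_range_succ _ _
  have hpos : ∀ k ≤ n, 0 ≤ d k := by
    intro k hk
    have hinj : Set.InjOn w (Finset.range k : Set ℕ) := by
      intro a ha b hb hab
      have ha : a < k := by simpa using ha
      have hb : b < k := by simpa using hb
      have e1 := hwj ⟨a, by omega⟩
      have e2 := hwj ⟨b, by omega⟩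
      simp only at e1 e2
      have : σ ⟨a, by omega⟩ = σ ⟨b, by omega⟩ := by
        apply Fin.ext; omega
      simpa using σ.injective this
    have := Finset.sum_range_le_sum (s := (Finset.range k).image w) (c := 0) (by
      intro x hx
      obtain ⟨j, hj, rfl⟩ := Finset.mem_image.1 hx
      have hj := Finset.mem_range.1 hj
      have e1 := hwj ⟨j, by omega⟩
      have := (σ ⟨j, by omega⟩).2
      simp only at e1
      omega)
    rw [Finset.card_image_of_injOn hinj, Finset.sum_image hinj, Finset.card_range] at this
    simp only [hd, Finset.sum_sub_distrib]
    simp only [zero_add] at this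
    linarith
  have hn : d n = 0 := by
    simp only [hd, Finset.sum_sub_distrib]
    rw [Finset.sum_range, Finset.sum_range (fun j : ℕ => (j:ℤ))]
    simp only [hwj]
    rw [Equiv.sum_comp σ (fun j : Fin n => (n:ℤ) - 1 - ((j : ℕ) : ℤ))]
    rw [← Equiv.sum_comp Fin.revPerm]
    rw [sub_eq_zero]
    apply Finset.sum_congr rfl
    intro i _
    have := i.2
    simp only [Fin.revPerm_apply, Fin.val_rev]
    omega
  refine ⟨fun i => d i, by simp [hd], by simp [hn], ?_, ?_⟩
  · intro i hi
    refine ⟨Int.cast_nonneg (hpos (i+1) (by omega)), ?_⟩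
    have h1 := perm_lower σ h ⟨i, hi⟩
    have e1 := hwj ⟨i, hi⟩
    simp only at h1 e1
    have : d (i+1) ≤ d i + 1 := by rw [hs]; omega
    show ((d (i+1) : ℤ) : ℝ) ≤ (d i : ℤ) + (1:ℝ)
    exact_mod_cast this
  · intro i
    simp only [hs, hwj, permPoint]
    push_cast; ring

/-- real sequence attached to step probabilities -/
def dseq (p : ℕ → ℝ) : ℕ → ℝ
  | 0 => 0
  | i+1 => p i * (dseq p i + 1)

theorem dseq_congr (p q : ℕ → ℝ) (k : ℕ) (h : ∀ i < k, p i = q i) : dseq p k = dseq q k := by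
  induction k with
  | zero => rfl
  | succ k ih =>
    simp only [dseq]
    rw [ih (fun i hi => h i (by omega)), h k (by omega)]

theorem dseq_affine (p : ℕ → ℝ) (j : ℕ) (t : ℝ) (i : ℕ) :
    dseq (Function.update p j t) i =
      (1 - t) * dseq (Function.update p j 0) i + t * dseq (Function.update p j 1) i := by
  induction i with
  | zero => simp [dseq]
  | succ i ih =>
    by_cases hij : i = j
    · subst hij
      have h : ∀ s, dseq (Function.update p i s) i = dseq p i := by
        intro s
        apply dseq_congr
        intro k hk
        rw [Function.update_of_ne (by omega)]
      simp [dseq, h]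
    · simp only [dseq, Function.update_of_ne hij, ih]; ring

/-- point attached to probabilities -/
def ptOf (n : ℕ) (p : ℕ → ℝ) : Fin n → ℝ :=
  fun i => ((n:ℝ) - (i:ℕ)) + dseq p i - dseq p (i+1)

theorem ptOf_hull (n : ℕ) (V : Set (Fin n → ℝ))
    (hV : ∀ p : ℕ → ℝ, (∀ i, p i = 0 ∨ p i = 1) → p (n-1) = 0 → ptOf n p ∈ V)
    (k : ℕ) : ∀ p : ℕ → ℝ, (∀ i, 0 ≤ p i ∧ p i ≤ 1) → (∀ i ≥ k, p i = 0 ∨ p i = 1) →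
      p (n-1) = 0 → ptOf n p ∈ convexHull ℝ V := by
  induction k with
  | zero =>
    intro p _ h hp
    exact subset_convexHull ℝ V (hV p (fun i => h i (by omega)) hp)
  | succ k ih =>
    intro p h01 h hp
    by_cases hk : k = n - 1
    · refine ih p h01 ?_ hp
      intro i hi
      by_cases hik : i = k
      · left; rw [hik, hk, hp]
      · exact h i (by omega)
    have haff : ptOf n p = (1 - p k) • ptOf n (Function.update p k 0) +
        p k • ptOf n (Function.update p k 1) := by
      funext i
      have := dseq_affine p k (p k)
      rw [Function.update_eq_self] at this
      simp only [ptOf, Pi.add_apply, Pi.smul_apply, smul_eq_mul, this]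
      ring
    have hu : ∀ s : ℝ, (s = 0 ∨ s = 1) → ptOf n (Function.update p k s) ∈ convexHull ℝ V := by
      intro s hs
      apply ih
      · intro i
        by_cases hik : i = k
        · subst hik; rw [Function.update_self]
          rcases hs with rfl | rfl <;> norm_num
        · rw [Function.update_of_ne hik]; exact h01 i
      · intro i hi
        by_cases hik : i = k
        · subst hik; rw [Function.update_self]; exact hs
        · rw [Function.update_of_ne hik]; exact h i (by omega)
      · rw [Function.update_of_ne (Ne.symm hk)]; exact hp
    rw [haff]
    exact convex_convexHull ℝ V (hu 0 (Or.inl rfl)) (hu 1 (Or.inr rfl))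
      (by linarith [(h01 k).2]) (h01 k).1 (by ring)

/-- natural-number version for 0/1 choices -/
def dnat (b : ℕ → Bool) : ℕ → ℕ
  | 0 => 0
  | i+1 => if b i then dnat b i + 1 else 0

theorem dnat_le (b : ℕ → Bool) (i : ℕ) : dnat b i ≤ i := by
  induction i with
  | zero => simp [dnat]
  | succ i ih => simp only [dnat]; split_ifs <;> omega

theorem dnat_false (b : ℕ → Bool) (j : ℕ) (hj : b j = false) (k : ℕ) (hk : j < k) :
    dnat b k + j + 1 ≤ k := by
  induction k with
  | zero => omega
  | succ k ih =>
    simp only [dnat]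
    by_cases h : j = k
    · subst h; simp [hj]
    · have := ih (by omega)
      split_ifs <;> omega

theorem dnat_run (b : ℕ → Bool) (j k : ℕ) (hjk : j ≤ k) (h : ∀ i, j ≤ i → i < k → b i = true) :
    dnat b k = dnat b j + (k - j) := by
  induction k, hjk using Nat.le_induction with
  | base => simp
  | succ k hk ih =>
    have := ih (fun i h1 h2 => h i h1 (by omega))
    simp only [dnat, h k hk (by omega), if_true]
    omega

/-- zero-based value of the permutation attached to `b` -/
def vb (n : ℕ) (b : ℕ → Bool) (j : ℕ) : ℕ := if b j then n - j - 2 else n - 1 - j + dnat b j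

/-- comparison of values -/
theorem vb_cmp (n : ℕ) (b : ℕ → Bool) (hb : b (n-1) = false) (j k : ℕ) (hjk : j < k) (hk : k < n) :
    vb n b k < vb n b j ∨ (b j = true ∧ b k = false ∧ (∀ i, j ≤ i → i < k → b i = true) ∧
      vb n b j < vb n b k) := by
  have hlt : ∀ i, i < n → b i = true → i + 1 < n := by
    intro i hi h
    by_contra hc
    have : i = n - 1 := by omega
    rw [this, hb] at h; exact absurd h (by simp)
  have dj := dnat_le b j
  have dk := dnat_le b k
  rcases hbj : b j with _ | _
  · left
    have := dnat_false b j hbj k hjk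
    rcases hbk : b k with _ | _
    · simp only [vb, hbj, hbk]; simp; omega
    · have := hlt k hk hbk
      simp only [vb, hbj, hbk]; simp; omega
  · have h1 := hlt j (by omega) hbj
    rcases hbk : b k with _ | _
    · by_cases hr : ∀ i, j ≤ i → i < k → b i = true
      · right
        refine ⟨rfl, rfl, hr, ?_⟩
        have := dnat_run b j k hjk.le hr
        simp only [vb, hbj, hbk]; simp; omega
      · left
        push Not at hr
        obtain ⟨i, h2, h3, h4⟩ := hr
        have h4 : b i = false := by simpa using h4
        have : i ≠ j := by rintro rfl; rw [hbj] at h4; exact absurd h4 (by simp)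
        have := dnat_false b i h4 k h3
        simp only [vb, hbj, hbk]; simp; omega
    · left
      have := hlt k hk hbk
      simp only [vb, hbj, hbk]; simp; omega

theorem vb_perm (n : ℕ) (b : ℕ → Bool) (hb : b (n-1) = false) :
    ∃ σ : Equiv.Perm (Fin n), (∀ i : Fin n, (σ i : ℕ) = vb n b i) ∧
      ∀ i j k : Fin n, i < j → j < k → σ i < σ j → σ i < σ k → False := by
  have hlt : ∀ i : Fin n, vb n b i < n := by
    intro i
    have := i.2
    have := dnat_le b i
    simp only [vb]; split_ifs <;> omega
  let f : Fin n → Fin n := fun i => ⟨vb n b i, hlt i⟩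
  have hf : Function.Injective f := by
    intro i j hij
    have h : vb n b i = vb n b j := congrArg Fin.val hij
    rcases lt_trichotomy i j with h' | h' | h'
    · rcases vb_cmp n b hb i j h' j.2 with h1 | ⟨_, _, _, h1⟩ <;> omega
    · exact h'
    · rcases vb_cmp n b hb j i h' i.2 with h1 | ⟨_, _, _, h1⟩ <;> omega
  refine ⟨Equiv.ofBijective f (Finite.injective_iff_bijective.1 hf), fun i => rfl, ?_⟩
  intro i j k hij hjk h1 h2
  have h1 : vb n b i < vb n b j := h1
  have h2 : vb n b i < vb n b k := h2
  have hik := hij.trans hjk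
  rcases vb_cmp n b hb i j hij j.2 with h3 | ⟨_, h3, _, _⟩
  · omega
  rcases vb_cmp n b hb i k hik k.2 with h4 | ⟨_, _, h4, _⟩
  · omega
  have := h4 j (Fin.le_def.1 hij.le) hjk
  rw [h3] at this
  exact absurd this (by simp)

theorem ptOf_vertex (n : ℕ) (p : ℕ → ℝ) (h : ∀ i, p i = 0 ∨ p i = 1) (hp : p (n-1) = 0) :
    ptOf n p ∈ permPoint ''
    {σ : Equiv.Perm (Fin n) | ¬ containsPattern σ p123 ∧ ¬ containsPattern σ p132} := by
  classical
  let b : ℕ → Bool := fun i => decide (p i = 1)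
  have hb : ∀ i, p i = if b i then 1 else 0 := by
    intro i
    rcases h i with h | h <;> simp [b, h]
  have hd : ∀ i, dseq p i = dnat b i := by
    intro i
    induction i with
    | zero => simp [dseq, dnat]
    | succ i ih =>
      simp only [dseq, dnat, ih, hb]
      split_ifs <;> simp
  have hbn : b (n-1) = false := by simp [b, hp]
  obtain ⟨σ, h1, h2⟩ := vb_perm n b hbn
  refine ⟨σ, (avoid_iff σ).2 h2, ?_⟩
  funext i
  have hi := i.2
  simp only [permPoint, ptOf, h1, hd, dnat, vb]
  rcases hbi : b i with _ | _
  · have : n - 1 - (i:ℕ) = n - (1 + i) := by omega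
    simp only [this, Bool.false_eq_true, if_false]
    push_cast [Nat.cast_sub (show 1 + (i:ℕ) ≤ n by omega)]
    ring
  · have : (i:ℕ) ≠ n - 1 := by
      intro h; rw [h, hbn] at hbi; exact absurd hbi (by simp)
    have e : n - (i:ℕ) - 2 = n - (i + 2) := by omega
    simp only [e, if_true]
    push_cast [Nat.cast_sub (show (i:ℕ) + 2 ≤ n by omega)]
    ring

theorem P_eq_feas (n : ℕ) (hn : 2 ≤ n) : P123132 n = feas n 1 := by
  apply Set.Subset.antisymm
  · apply convexHull_min _ (feas_convex n)
    rintro _ ⟨σ, hσ, rfl⟩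
    exact perm_feas σ ((avoid_iff σ).1 hσ)
  · rintro x ⟨d, h0, hdn, h, hx⟩
    have hnn : ∀ i ≤ n, 0 ≤ d i := by
      intro i hi
      cases i with
      | zero => rw [h0]
      | succ i => exact (h i (by omega)).1
    let p : ℕ → ℝ := fun i => if i < n then d (i+1) / (d i + 1) else 0
    have hdp : ∀ i ≤ n, dseq p i = d i := by
      intro i
      induction i with
      | zero => intro _; simp [dseq, h0]
      | succ i ih =>
        intro hi
        have := hnn i (by omega)
        simp only [dseq, ih (by omega), p, show i < n by omega, if_true]
        field_simp
    have hxp : x = ptOf n p := by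
      funext i
      have hi := i.2
      simp only [ptOf, hx, hdp i (by omega), hdp (i+1) (by omega), one_mul]
    rw [hxp]
    refine ptOf_hull n _ (fun q h1 h2 => ptOf_vertex n q h1 h2) n p ?_ ?_ ?_
    · intro i
      simp only [p]
      split_ifs with hi
      · have h1 := hnn i hi.le
        obtain ⟨h2, h3⟩ := h i hi
        exact ⟨by positivity, by rw [div_le_one (by positivity)]; exact h3⟩
      · norm_num
    · intro i hi
      left
      simp only [p, show ¬ i < n by omega, if_false]
    · simp only [p, show n - 1 < n by omega, if_true, show n - 1 + 1 = n by omega, hdn, zero_div]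

theorem stmt6 (n : ℕ) (hn : 2 ≤ n) :
    Set.ncard {x : Fin n → ℤ | (fun i => (x i : ℝ)) ∈ P123132 n} = catalan n ∧
    Filter.Tendsto
      (fun m : ℕ =>
        (Set.ncard {x : Fin n → ℤ | (fun i => (x i : ℝ)) ∈ (m : ℝ) • P123132 n} : ℝ) /
          (m : ℝ) ^ (n - 1))
      Filter.atTop
      (nhds ((n : ℝ) ^ (n - 2) / Nat.factorial (n - 1))) := by
  rw [P_eq_feas n hn]
  constructor
  · have := lattice_ncard n 1 hn
    rw [Nat.cast_one] at this
    rw [this, cnt_one n hn]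
  · refine (cnt_lim n hn).congr' ?_
    filter_upwards [Filter.eventually_gt_atTop 0] with m hm
    rw [smul_feas n m (by exact_mod_cast hm), lattice_ncard n m hn]
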